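/- arXiv:2502.20666 — 3 statements merged into one kernel-verified Lean document; each statement's English description precedes it below -/
import Mathlib

section
/- Let X be a complex Banach space and L an invertible bounded linear operator on X. If L is generalized hyperbolic with associated splitting X = S ⊕ U and projections P_S : X → S and P_U : X → U, then Shad(L) ≤ ‖P_S‖ · Σ_{k=0}^∞ ‖Lᵏ|_S‖ + ‖P_U‖ · Σ_{k=1}^∞ ‖L⁻ᵏ|_U‖ < ∞; in particular, L has the shadowing property. -/
open Filter Topology

variable {X : Type*} [NormedAddCommGroup X] [NormedSpace ℂ X] [CompleteSpace X]

/-- `L` has the shadowing property. -/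
def ShadowingProperty (L : X ≃L[ℂ] X) : Prop :=
  ∀ ε > (0 : ℝ), ∃ δ > (0 : ℝ), ∀ x : ℤ → X,
    (∀ n : ℤ, ‖L (x n) - x (n + 1)‖ ≤ δ) →
    ∃ p : X, ∀ n : ℤ, ‖(L ^ n) p - x n‖ ≤ ε

/-- `K` is a shadowableness constant of `L`. -/
def ShadowablenessConstant (L : X ≃L[ℂ] X) (K : ℝ) : Prop :=
  0 < K ∧ ∀ z : ℤ → X, (∃ M, ∀ n : ℤ, ‖z n‖ ≤ M) →
    ∃ y : ℤ → X, (∀ n : ℤ, ‖y n‖ ≤ K * ⨆ n : ℤ, ‖z n‖) ∧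
      ∀ n : ℤ, y (n + 1) = L (y n) + z n

/-- `Shad L` is the infimum of the shadowableness constants of `L`
(`∞` if there are none). -/
noncomputable def Shad (L : X ≃L[ℂ] X) : ENNReal :=
  ⨅ (K : ℝ) (_ : ShadowablenessConstant L K), ENNReal.ofReal K

/-!
Split the forcing term as `z = P z + Q z`. The part `P z` is propagated forward from the past and
`Q z` is pulled back from the future, which gives the solution
`y n = ∑ k ≥ 0, L ^ k (P (z (n - 1 - k))) - ∑ k ≥ 1, L ^ (-k) (Q (z (n + k - 1)))`
of `y (n + 1) = L (y n) + z n`. The operator norms in the two series decay geometrically, and their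
sum bounds `‖y‖ / ‖z‖`. Adding to a pseudo-orbit `x` the solution forced by its error
`L (x n) - x (n + 1)` turns it into a true orbit, whence the shadowing property.
-/

section Automorphism

variable {R E : Type*} [Semiring R] [TopologicalSpace E] [AddCommMonoid E] [Module R E]

theorem toContinuousLinearMap_pow (L : E ≃L[R] E) (k : ℕ) :
    ((L ^ k : E ≃L[R] E) : E →L[R] E) = (L : E →L[R] E) ^ k := by
  induction k with
  | zero => rfl
  | succ k ih => rw [pow_succ, pow_succ, ContinuousLinearEquiv.toContinuousLinearMap_mul, ih]

theorem zpow_add_one_apply (L : E ≃L[R] E) (n : ℤ) (v : E) :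
    (L ^ (n + 1)) v = L ((L ^ n) v) := by
  rw [add_comm, zpow_one_add]
  rfl

theorem zpow_apply_eq_of_forall_succ (L : E ≃L[R] E) {x : ℤ → E}
    (hx : ∀ n, x (n + 1) = L (x n)) (n : ℤ) : (L ^ n) (x 0) = x n := by
  induction n using Int.induction_on with
  | zero => rfl
  | succ k ih => rw [zpow_add_one_apply, ih, hx]
  | pred k ih =>
    apply L.injective
    rw [← zpow_add_one_apply, ← hx, sub_add_cancel, ih]

end Automorphism

section ForcedEquation

variable {R E : Type*} [Semiring R] [TopologicalSpace E] [AddCommGroup E] [Module R E]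

/-- The solution of `y (n + 1) = T (y n) + f n` that accumulates the past values of the forcing
term `f`. It is meaningful only when the series converges. -/
noncomputable def forwardSolution (T : E →L[R] E) (f : ℤ → E) (n : ℤ) : E :=
  ∑' k : ℕ, (T ^ k) (f (n - 1 - k))

/-- The solution of `y (n + 1) = T (y n) + f n` that compensates the future values of the forcing
term `f`, where `B` is a right inverse of `T`. It is meaningful only when the series converges. -/
noncomputable def backwardSolution (B : E →L[R] E) (f : ℤ → E) (n : ℤ) : E :=
  -∑' k : ℕ, (B ^ (k + 1)) (f (n + k))

variable [IsTopologicalAddGroup E] [T2Space E]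

theorem forwardSolution_add_one {T : E →L[R] E} {f : ℤ → E}
    (hf : ∀ n : ℤ, Summable fun k : ℕ => (T ^ k) (f (n - 1 - k))) (n : ℤ) :
    forwardSolution T f (n + 1) = T (forwardSolution T f n) + f n := by
  have shift (k : ℕ) : n + 1 - 1 - ((k + 1 : ℕ) : ℤ) = n - 1 - k := by push_cast; ring
  rw [forwardSolution, (hf (n + 1)).tsum_eq_zero_add, forwardSolution, T.map_tsum (hf n), add_comm]
  simp only [shift, pow_succ', ContinuousLinearMap.mul_def, ContinuousLinearMap.comp_apply]
  simp

theorem backwardSolution_add_one {T B : E →L[R] E} (hTB : T * B = 1) {f : ℤ → E}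
    (hf : ∀ n : ℤ, Summable fun k : ℕ => (B ^ (k + 1)) (f (n + k))) (n : ℤ) :
    backwardSolution B f (n + 1) = T (backwardSolution B f n) + f n := by
  have shift (k : ℕ) : n + ((k + 1 : ℕ) : ℤ) = n + 1 + k := by push_cast; ring
  have cancel (k : ℕ) (v : E) : T ((B ^ (k + 1)) v) = (B ^ k) v := by
    rw [← mul_apply_eq_comp, pow_succ', ← mul_assoc, hTB, one_mul]
  have step : T (∑' k : ℕ, (B ^ (k + 1)) (f (n + k))) =
      f n + ∑' k : ℕ, (B ^ (k + 1)) (f (n + 1 + k)) := by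
    have hf' : Summable fun k : ℕ => (B ^ k) (f (n + k)) := by
      simpa only [Function.comp_def, cancel] using (hf n).map T T.continuous
    simp only [T.map_tsum (hf n), cancel, hf'.tsum_eq_zero_add, shift]
    simp
  rw [backwardSolution, backwardSolution, map_neg, step]
  abel

end ForcedEquation

section Normed

variable {ι 𝕜 E F G : Type*} [NontriviallyNormedField 𝕜]
  [SeminormedAddCommGroup E] [NormedSpace 𝕜 E] [SeminormedAddCommGroup F] [NormedSpace 𝕜 F]
  [SeminormedAddCommGroup G] [NormedSpace 𝕜 G]

theorem summable_apply_of_summable_norm [CompleteSpace F] {A : ι → E →L[𝕜] F}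
    (hA : Summable fun i => ‖A i‖) {u : ι → E} {M : ℝ} (hu : ∀ i, ‖u i‖ ≤ M) :
    Summable fun i => A i (u i) :=
  (hA.mul_right M).of_norm_bounded fun i => (A i).le_opNorm_of_le (hu i)

theorem norm_tsum_apply_le {A : ι → E →L[𝕜] F} (hA : Summable fun i => ‖A i‖) {u : ι → E}
    {M : ℝ} (hu : ∀ i, ‖u i‖ ≤ M) : ‖∑' i, A i (u i)‖ ≤ (∑' i, ‖A i‖) * M :=
  tsum_of_norm_bounded (hA.hasSum.mul_right M) fun i => (A i).le_opNorm_of_le (hu i)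

theorem norm_comp_le_norm_mul_norm_comp_subtypeL {S : Submodule 𝕜 E} {P : G →L[𝕜] E}
    (hP : ∀ x, P x ∈ S) (A : E →L[𝕜] F) : ‖A.comp P‖ ≤ ‖P‖ * ‖A.comp S.subtypeL‖ := by
  refine ContinuousLinearMap.opNorm_le_bound _ (by positivity) fun x => ?_
  calc ‖A (P x)‖ ≤ ‖A.comp S.subtypeL‖ * ‖P x‖ := (A.comp S.subtypeL).le_opNorm ⟨P x, hP x⟩
    _ ≤ ‖A.comp S.subtypeL‖ * (‖P‖ * ‖x‖) := by gcongr; exact P.le_opNorm x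
    _ = ‖P‖ * ‖A.comp S.subtypeL‖ * ‖x‖ := by ring

theorem summable_norm_comp_of_subtypeL {S : Submodule 𝕜 E} {P : G →L[𝕜] E} (hP : ∀ x, P x ∈ S)
    {A : ι → E →L[𝕜] F} (hA : Summable fun i => ‖(A i).comp S.subtypeL‖) :
    Summable fun i => ‖(A i).comp P‖ :=
  (hA.mul_left ‖P‖).of_nonneg_of_le (fun _ => norm_nonneg _)
    fun i => norm_comp_le_norm_mul_norm_comp_subtypeL hP (A i)

theorem tsum_norm_comp_le_norm_mul_tsum {S : Submodule 𝕜 E} {P : G →L[𝕜] E} (hP : ∀ x, P x ∈ S)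
    {A : ι → E →L[𝕜] F} (hA : Summable fun i => ‖(A i).comp S.subtypeL‖) :
    ∑' i, ‖(A i).comp P‖ ≤ ‖P‖ * ∑' i, ‖(A i).comp S.subtypeL‖ := by
  rw [← tsum_mul_left]
  exact (summable_norm_comp_of_subtypeL hP hA).tsum_le_tsum
    (fun i => norm_comp_le_norm_mul_norm_comp_subtypeL hP (A i)) (hA.mul_left ‖P‖)

theorem summable_norm_comp_subtypeL_of_le_geometric {S : Submodule 𝕜 E} {A : ℕ → E →L[𝕜] F}
    {c t : ℝ} (hc : 0 ≤ c) (ht0 : 0 ≤ t) (ht1 : t < 1)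
    (hA : ∀ x ∈ S, ∀ n, ‖A n x‖ ≤ c * t ^ n * ‖x‖) :
    Summable fun n => ‖(A n).comp S.subtypeL‖ :=
  ((summable_geometric_of_lt_one ht0 ht1).mul_left c).of_nonneg_of_le (fun _ => norm_nonneg _)
    fun n => ContinuousLinearMap.opNorm_le_bound _ (by positivity) fun x => hA x x.2 n

theorem norm_forwardSolution_le {T : F →L[𝕜] F} {P : E →L[𝕜] F}
    (hP : Summable fun k : ℕ => ‖(T ^ k).comp P‖) {z : ℤ → E} {M : ℝ}
    (hz : ∀ n, ‖z n‖ ≤ M) (n : ℤ) :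
    ‖forwardSolution T (fun m => P (z m)) n‖ ≤ (∑' k : ℕ, ‖(T ^ k).comp P‖) * M :=
  norm_tsum_apply_le hP (u := fun k : ℕ => z (n - 1 - k)) fun _ => hz _

theorem norm_backwardSolution_le {B : F →L[𝕜] F} {Q : E →L[𝕜] F}
    (hQ : Summable fun k : ℕ => ‖(B ^ (k + 1)).comp Q‖) {z : ℤ → E} {M : ℝ}
    (hz : ∀ n, ‖z n‖ ≤ M) (n : ℤ) :
    ‖backwardSolution B (fun m => Q (z m)) n‖ ≤ (∑' k : ℕ, ‖(B ^ (k + 1)).comp Q‖) * M :=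
  (norm_neg _).trans_le <| norm_tsum_apply_le hQ (u := fun k : ℕ => z (n + k)) fun _ => hz _

theorem exists_solution_norm_le_tsum_mul {V : Type*} [NormedAddCommGroup V] [NormedSpace 𝕜 V]
    [CompleteSpace V] {T B P Q : V →L[𝕜] V} (hTB : T * B = 1)
    (hPQ : P + Q = 1) (hP : Summable fun k : ℕ => ‖(T ^ k).comp P‖)
    (hQ : Summable fun k : ℕ => ‖(B ^ (k + 1)).comp Q‖) {z : ℤ → V} {M : ℝ} (hz : ∀ n, ‖z n‖ ≤ M) :
    ∃ y : ℤ → V,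
      (∀ n, ‖y n‖ ≤ (∑' k : ℕ, ‖(T ^ k).comp P‖ + ∑' k : ℕ, ‖(B ^ (k + 1)).comp Q‖) * M) ∧
      ∀ n, y (n + 1) = T (y n) + z n := by
  refine ⟨fun n => forwardSolution T (fun m => P (z m)) n + backwardSolution B (fun m => Q (z m)) n,
    fun n => ?_, fun n => ?_⟩
  · rw [add_mul]
    exact norm_add_le_of_le (norm_forwardSolution_le hP hz n) (norm_backwardSolution_le hQ hz n)
  · have split : P (z n) + Q (z n) = z n := congr($hPQ (z n))
    have forward_summable (m : ℤ) : Summable fun k : ℕ => (T ^ k) (P (z (m - 1 - k))) :=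
      summable_apply_of_summable_norm hP (u := fun k : ℕ => z (m - 1 - k)) fun _ => hz _
    have backward_summable (m : ℤ) : Summable fun k : ℕ => (B ^ (k + 1)) (Q (z (m + k))) :=
      summable_apply_of_summable_norm hQ (u := fun k : ℕ => z (m + k)) fun _ => hz _
    beta_reduce
    rw [forwardSolution_add_one (f := fun m => P (z m)) forward_summable,
      backwardSolution_add_one (f := fun m => Q (z m)) hTB backward_summable, map_add,
      add_add_add_comm, split]

end Normed

section Shadowing

variable {E : Type*} [NormedAddCommGroup E] [NormedSpace ℂ E]

theorem ShadowablenessConstant.shadowingProperty {L : E ≃L[ℂ] E} {K : ℝ}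
    (hK : ShadowablenessConstant L K) : ShadowingProperty L := by
  obtain ⟨hK0, hK⟩ := hK
  intro ε hε
  refine ⟨ε / K, by positivity, fun x hx => ?_⟩
  obtain ⟨y, hy, hrec⟩ := hK (fun n => L (x n) - x (n + 1)) ⟨_, hx⟩
  have orbit (n : ℤ) : x (n + 1) + y (n + 1) = L (x n + y n) := by
    rw [hrec n, map_add]
    abel
  refine ⟨x 0 + y 0, fun n => ?_⟩
  calc ‖(L ^ n) (x 0 + y 0) - x n‖ = ‖y n‖ := by
        rw [zpow_apply_eq_of_forall_succ L (x := fun n => x n + y n) orbit, add_sub_cancel_left]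
    _ ≤ K * ⨆ m : ℤ, ‖L (x m) - x (m + 1)‖ := hy n
    _ ≤ K * (ε / K) := by gcongr; exact ciSup_le hx
    _ = ε := mul_div_cancel₀ ε hK0.ne'

theorem shad_le_of_forall_gt {L : E ≃L[ℂ] E} {C : ℝ}
    (hC : ∀ K, C < K → ShadowablenessConstant L K) : Shad L ≤ ENNReal.ofReal C :=
  ge_of_tendsto (ENNReal.continuous_ofReal.continuousWithinAt (s := Set.Ioi C))
    (eventually_nhdsWithin_of_forall fun K hK => iInf₂_le K (hC K hK))

theorem shadowablenessConstant_of_tsum_lt [CompleteSpace E] (L : E ≃L[ℂ] E) {P Q : E →L[ℂ] E}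
    (hPQ : P + Q = 1)
    (hP : Summable fun k : ℕ => ‖((L ^ k : E ≃L[ℂ] E) : E →L[ℂ] E).comp P‖)
    (hQ : Summable fun k : ℕ => ‖((L.symm ^ (k + 1) : E ≃L[ℂ] E) : E →L[ℂ] E).comp Q‖) {K : ℝ}
    (hK : ∑' k : ℕ, ‖((L ^ k : E ≃L[ℂ] E) : E →L[ℂ] E).comp P‖ +
      ∑' k : ℕ, ‖((L.symm ^ (k + 1) : E ≃L[ℂ] E) : E →L[ℂ] E).comp Q‖ < K) :
    ShadowablenessConstant L K := by
  refine ⟨hK.trans_le' (by positivity), fun z ⟨M, hM⟩ => ?_⟩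
  have hz (n : ℤ) : ‖z n‖ ≤ ⨆ m : ℤ, ‖z m‖ := le_ciSup ⟨M, Set.forall_mem_range.2 hM⟩ n
  have hsup : 0 ≤ ⨆ m : ℤ, ‖z m‖ := Real.iSup_nonneg fun m => norm_nonneg (z m)
  simp only [toContinuousLinearMap_pow] at hP hQ hK
  obtain ⟨y, hy, hrec⟩ :=
    exists_solution_norm_le_tsum_mul L.coe_comp_coe_symm hPQ hP hQ hz
  exact ⟨y, fun n => (hy n).trans (mul_le_mul_of_nonneg_right hK.le hsup), hrec⟩

theorem shad_le_tsum_norm_comp [CompleteSpace E] (L : E ≃L[ℂ] E) {P Q : E →L[ℂ] E}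
    (hPQ : P + Q = 1)
    (hP : Summable fun k : ℕ => ‖((L ^ k : E ≃L[ℂ] E) : E →L[ℂ] E).comp P‖)
    (hQ : Summable fun k : ℕ => ‖((L.symm ^ (k + 1) : E ≃L[ℂ] E) : E →L[ℂ] E).comp Q‖) :
    Shad L ≤ ENNReal.ofReal (∑' k : ℕ, ‖((L ^ k : E ≃L[ℂ] E) : E →L[ℂ] E).comp P‖ +
      ∑' k : ℕ, ‖((L.symm ^ (k + 1) : E ≃L[ℂ] E) : E →L[ℂ] E).comp Q‖) :=
  shad_le_of_forall_gt fun _ hK => shadowablenessConstant_of_tsum_lt L hPQ hP hQ hK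

end Shadowing

theorem shad_le_of_generalizedHyperbolic_general (L : X ≃L[ℂ] X) (S U : Submodule ℂ X)
    (hS : Summable fun k : ℕ => ‖((L ^ k : X ≃L[ℂ] X) : X →L[ℂ] X).comp S.subtypeL‖)
    (hU : Summable fun k : ℕ => ‖((L.symm ^ (k + 1) : X ≃L[ℂ] X) : X →L[ℂ] X).comp U.subtypeL‖)
    (PS PU : X →L[ℂ] X) (hPS : ∀ x, PS x ∈ S) (hPU : ∀ x, PU x ∈ U)
    (hPSU : ∀ x, PS x + PU x = x) :
    Shad L ≤ ENNReal.ofReal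
      (‖PS‖ * (∑' k : ℕ, ‖((L ^ k : X ≃L[ℂ] X) : X →L[ℂ] X).comp S.subtypeL‖) +
       ‖PU‖ * (∑' k : ℕ, ‖((L.symm ^ (k + 1) : X ≃L[ℂ] X) : X →L[ℂ] X).comp U.subtypeL‖)) ∧
    ShadowingProperty L := by
  have hP := summable_norm_comp_of_subtypeL hPS hS
  have hQ := summable_norm_comp_of_subtypeL hPU hU
  have hPQ : PS + PU = 1 := ContinuousLinearMap.ext hPSU
  refine ⟨(shad_le_tsum_norm_comp L hPQ hP hQ).trans (ENNReal.ofReal_le_ofReal ?_),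
    (shadowablenessConstant_of_tsum_lt L hPQ hP hQ (lt_add_one _)).shadowingProperty⟩
  exact add_le_add (tsum_norm_comp_le_norm_mul_tsum hPS hS) (tsum_norm_comp_le_norm_mul_tsum hPU hU)

theorem shad_le_of_generalizedHyperbolic (L : X ≃L[ℂ] X) (S U : Submodule ℂ X)
    (hScl : IsClosed (S : Set X)) (hUcl : IsClosed (U : Set X)) (hcompl : IsCompl S U)
    (hLS : ∀ x ∈ S, L x ∈ S) (hLU : ∀ x ∈ U, L.symm x ∈ U)
    (c t : ℝ) (hc : 0 < c) (ht0 : 0 < t) (ht1 : t < 1)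
    (hSest : ∀ x ∈ S, ∀ n : ℕ, ‖(L ^ n) x‖ ≤ c * t ^ n * ‖x‖)
    (hUest : ∀ x ∈ U, ∀ n : ℕ, ‖(L.symm ^ n) x‖ ≤ c * t ^ n * ‖x‖)
    (PS PU : X →L[ℂ] X)
    (hPS : ∀ x, PS x ∈ S) (hPU : ∀ x, PU x ∈ U)
    (hPSU : ∀ x, PS x + PU x = x)
    (hPSid : ∀ x ∈ S, PS x = x) (hPUid : ∀ x ∈ U, PU x = x) :
    Summable (fun k : ℕ => ‖((L ^ k : X ≃L[ℂ] X) : X →L[ℂ] X).comp S.subtypeL‖) ∧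
    Summable (fun k : ℕ => ‖((L.symm ^ (k + 1) : X ≃L[ℂ] X) : X →L[ℂ] X).comp U.subtypeL‖) ∧
    Shad L ≤ ENNReal.ofReal
      (‖PS‖ * (∑' k : ℕ, ‖((L ^ k : X ≃L[ℂ] X) : X →L[ℂ] X).comp S.subtypeL‖) +
       ‖PU‖ * (∑' k : ℕ, ‖((L.symm ^ (k + 1) : X ≃L[ℂ] X) : X →L[ℂ] X).comp U.subtypeL‖)) ∧
    ShadowingProperty L := by
  have hS := summable_norm_comp_subtypeL_of_le_geometric
    (A := fun k => ((L ^ k : X ≃L[ℂ] X) : X →L[ℂ] X)) hc.le ht0.le ht1 hSest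
  have hU := (summable_nat_add_iff 1).2
    (summable_norm_comp_subtypeL_of_le_geometric
      (A := fun k => ((L.symm ^ k : X ≃L[ℂ] X) : X →L[ℂ] X)) hc.le ht0.le ht1 hUest)
  exact ⟨hS, hU, shad_le_of_generalizedHyperbolic_general L S U hS hU PS PU hPS hPU hPSU⟩
end

section
/- Let X be a complex Banach space and L an invertible bounded linear operator on X. If L has the shadowing property and the central direction E^c = {x ∈ X : sup_{n∈ℤ}‖Lⁿ(x)‖ < ∞} is a closed subspace of X, then E^c = {0}; in particular, L is expansive. -/
open Filter Topology

variable {X : Type*} [NormedAddCommGroup X] [NormedSpace ℂ X] [CompleteSpace X]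

/-- `L` is expansive. -/
def Expansive (L : X ≃L[ℂ] X) : Prop :=
  ∃ ε > (0 : ℝ), ∀ x : X, (∀ n : ℤ, ‖(L ^ n) x‖ ≤ ε) → x = 0

/-- The central direction of `L`. -/
def CentralDirection (L : X ≃L[ℂ] X) : Set X :=
  {x : X | ∃ M : ℝ, ∀ n : ℤ, ‖(L ^ n) x‖ ≤ M}

/-!
A closed central direction `Eᶜ` is a Banach space on which the iterates of `L` are pointwise
bounded, hence, by Banach-Steinhaus, uniformly bounded by some constant `C`. If the orbit of `x` is
sufficiently small, the orbit multiplied by the integer ramp `0, 1, …, N` is a pseudo-orbit. A point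
`p` shadowing it within distance `1` lies in `Eᶜ`; its orbit stays within `1` of `0` at time `0` and
of `N • Lᴺ x` at time `N`. Pulling the latter estimate back to time `0` gives `‖p - N • x‖ ≤ C`, so
`N ‖x‖ ≤ 1 + C` for every `N` and `x = 0`. Small orbits therefore vanish, and by linearity so do all
bounded ones.
-/

section ContinuousLinearEquivPowers

variable {R M : Type*} [Semiring R] [AddCommMonoid M] [Module R M] [TopologicalSpace M]

theorem zpow_add_apply (L : M ≃L[R] M) (m n : ℤ) (x : M) :
    (L ^ (m + n)) x = (L ^ m) ((L ^ n) x) :=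
  DFunLike.congr_fun (zpow_add L m n) x

theorem zpow_one_add_apply (L : M ≃L[R] M) (n : ℤ) (x : M) :
    (L ^ (1 + n)) x = L ((L ^ n) x) :=
  DFunLike.congr_fun (zpow_one_add L n) x

theorem zpow_neg_apply_zpow_apply (L : M ≃L[R] M) (n : ℤ) (x : M) :
    (L ^ (-n)) ((L ^ n) x) = x := by
  rw [← zpow_add_apply, neg_add_cancel, zpow_zero]
  rfl

end ContinuousLinearEquivPowers

section NormedSpace

variable {E : Type*} [NormedAddCommGroup E] [NormedSpace ℂ E] {L : E ≃L[ℂ] E}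

/-- The central direction of `L`, bundled as a linear subspace so that Banach-Steinhaus applies to
the restrictions of the iterates of `L` to it. -/
def centralSubmodule (L : E ≃L[ℂ] E) : Submodule ℂ E where
  carrier := CentralDirection L
  zero_mem' := ⟨0, fun n => by rw [map_zero, norm_zero]⟩
  add_mem' := by
    rintro x y ⟨M, hM⟩ ⟨N, hN⟩
    refine ⟨M + N, fun n => ?_⟩
    rw [map_add]
    exact norm_add_le_of_le (hM n) (hN n)
  smul_mem' := by
    rintro c x ⟨M, hM⟩
    refine ⟨‖c‖ * M, fun n => ?_⟩
    rw [map_smul, norm_smul]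
    exact mul_le_mul_of_nonneg_left (hM n) (norm_nonneg c)

theorem mem_centralSubmodule {x : E} :
    x ∈ centralSubmodule L ↔ ∃ M : ℝ, ∀ n : ℤ, ‖(L ^ n) x‖ ≤ M :=
  Iff.rfl

theorem zpow_apply_mem_centralSubmodule {x : E} (hx : x ∈ centralSubmodule L) (n : ℤ) :
    (L ^ n) x ∈ centralSubmodule L := by
  obtain ⟨M, hM⟩ := mem_centralSubmodule.mp hx
  refine mem_centralSubmodule.mpr ⟨M, fun m => ?_⟩
  rw [← zpow_add_apply]
  exact hM (m + n)

theorem exists_norm_zpow_apply_le_of_isComplete (hE : IsComplete (CentralDirection L)) :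
    ∃ C : ℝ, ∀ x ∈ centralSubmodule L, ∀ n : ℤ, ‖(L ^ n) x‖ ≤ C * ‖x‖ := by
  have : CompleteSpace (centralSubmodule L) := hE.completeSpace_coe
  let iterate (n : ℤ) : centralSubmodule L →L[ℂ] E :=
    ((L ^ n : E ≃L[ℂ] E) : E →L[ℂ] E).comp (centralSubmodule L).subtypeL
  obtain ⟨C, hC⟩ : ∃ C, ∀ n, ‖iterate n‖ ≤ C :=
    banach_steinhaus fun x => mem_centralSubmodule.mp x.2
  exact ⟨C, fun x hx n => (iterate n).le_of_opNorm_le (hC n) ⟨x, hx⟩⟩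

theorem Expansive.centralDirection_eq_zero (h : Expansive L) : CentralDirection L = {0} := by
  obtain ⟨ε, hε, hzero⟩ := h
  refine Set.eq_singleton_iff_unique_mem.mpr ⟨(centralSubmodule L).zero_mem, ?_⟩
  rintro x ⟨M, hM⟩
  obtain ⟨c, hc, hMc⟩ := exists_pos_mul_lt hε M
  have hcx : (c : ℂ) • x = 0 := by
    refine hzero _ fun n => ?_
    calc ‖(L ^ n) ((c : ℂ) • x)‖ = ‖(L ^ n) x‖ * c := by
          rw [map_smul, norm_smul, Complex.norm_of_nonneg hc.le, mul_comm]
      _ ≤ M * c := mul_le_mul_of_nonneg_right (hM n) hc.le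
      _ ≤ ε := hMc.le
  exact (smul_eq_zero.mp hcx).resolve_left (Complex.ofReal_ne_zero.mpr hc.ne')

theorem ShadowingProperty.exists_norm_zpow_apply_sub_zsmul_le (hL : ShadowingProperty L) {ε : ℝ}
    (hε : 0 < ε) :
    ∃ δ > 0, ∀ x : E, (∀ n : ℤ, ‖(L ^ n) x‖ ≤ δ) →
      ∀ k : ℤ → ℤ, (∀ n, |k n - k (n + 1)| ≤ 1) → ∃ p : E, ∀ n, ‖(L ^ n) (p - k n • x)‖ ≤ ε := by
  obtain ⟨δ, hδ, hshadow⟩ := hL ε hε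
  refine ⟨δ, hδ, fun x hx k hk => ?_⟩
  have hpseudo (n : ℤ) : ‖L (k n • (L ^ n) x) - k (n + 1) • (L ^ (n + 1)) x‖ ≤ δ := by
    have hstep : ‖k n - k (n + 1)‖ ≤ 1 := by
      rw [Int.norm_eq_abs]
      exact_mod_cast hk n
    calc ‖L (k n • (L ^ n) x) - k (n + 1) • (L ^ (n + 1)) x‖
        = ‖(k n - k (n + 1)) • (L ^ (n + 1)) x‖ := by
          rw [map_zsmul, ← zpow_one_add_apply, add_comm 1 n, sub_smul]
      _ ≤ ‖k n - k (n + 1)‖ * ‖(L ^ (n + 1)) x‖ := norm_zsmul_le _ _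
      _ ≤ ‖(L ^ (n + 1)) x‖ := mul_le_of_le_one_left (norm_nonneg _) hstep
      _ ≤ δ := hx (n + 1)
  obtain ⟨p, hp⟩ := hshadow _ hpseudo
  exact ⟨p, fun n => by simpa only [map_sub, map_zsmul] using hp n⟩

theorem mem_centralSubmodule_of_norm_zpow_apply_sub_zsmul_le {p x : E}
    (hx : x ∈ centralSubmodule L) {k : ℤ → ℤ} {K : ℝ} (hk : ∀ n, ‖k n‖ ≤ K) {ε : ℝ}
    (hp : ∀ n, ‖(L ^ n) (p - k n • x)‖ ≤ ε) :
    p ∈ centralSubmodule L := by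
  obtain ⟨M, hM⟩ := mem_centralSubmodule.mp hx
  refine mem_centralSubmodule.mpr ⟨ε + K * M, fun n => ?_⟩
  have hkx : ‖k n • (L ^ n) x‖ ≤ K * M :=
    (norm_zsmul_le _ _).trans
      (mul_le_mul (hk n) (hM n) (norm_nonneg _) ((norm_nonneg _).trans (hk n)))
  calc ‖(L ^ n) p‖ = ‖(L ^ n) (p - k n • x) + k n • (L ^ n) x‖ := by
        rw [map_sub, map_zsmul, sub_add_cancel]
    _ ≤ ε + K * M := norm_add_le_of_le (hp n) hkx

theorem ShadowingProperty.exists_mem_centralSubmodule_norm_le (hL : ShadowingProperty L) {ε : ℝ}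
    (hε : 0 < ε) :
    ∃ δ > 0, ∀ x : E, (∀ n : ℤ, ‖(L ^ n) x‖ ≤ δ) →
      ∀ N : ℕ, ∃ p ∈ centralSubmodule L, ‖p‖ ≤ ε ∧ ‖(L ^ (N : ℤ)) (p - N • x)‖ ≤ ε := by
  obtain ⟨δ, hδ, hshadow⟩ := hL.exists_norm_zpow_apply_sub_zsmul_le hε
  refine ⟨δ, hδ, fun x hx N => ?_⟩
  let ramp (n : ℤ) : ℤ := max 0 (min n N)
  have hramp_step (n : ℤ) : |ramp n - ramp (n + 1)| ≤ 1 := by grind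
  have hramp_le (n : ℤ) : ‖ramp n‖ ≤ N := by
    rw [Int.norm_eq_abs]
    exact_mod_cast (by grind : |ramp n| ≤ N)
  have hramp_zero : ramp 0 = 0 := by grind
  have hramp_N : ramp N = N := by grind
  obtain ⟨p, hp⟩ := hshadow x hx ramp hramp_step
  refine ⟨p, mem_centralSubmodule_of_norm_zpow_apply_sub_zsmul_le ⟨δ, hx⟩ hramp_le hp, ?_, ?_⟩
  · have hp_zero : ‖p - ramp 0 • x‖ ≤ ε := hp 0
    rwa [hramp_zero, zero_smul, sub_zero] at hp_zero
  · simpa only [hramp_N, natCast_zsmul] using hp N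

theorem ShadowingProperty.expansive_of_norm_zpow_apply_le (hL : ShadowingProperty L) {C : ℝ}
    (hC : ∀ x ∈ centralSubmodule L, ∀ n : ℤ, ‖(L ^ n) x‖ ≤ C * ‖x‖) :
    Expansive L := by
  obtain ⟨δ, hδ, hshadow⟩ := hL.exists_mem_centralSubmodule_norm_le one_pos
  refine ⟨δ, hδ, fun x hx => ?_⟩
  have hxE : x ∈ centralSubmodule L := ⟨δ, hx⟩
  by_contra hx0
  have hxpos : 0 < ‖x‖ := norm_pos_iff.mpr hx0
  have hC0 : 0 ≤ C := nonneg_of_mul_nonneg_left ((norm_nonneg _).trans (hC x hxE 0)) hxpos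
  obtain ⟨N, hN⟩ := exists_lt_nsmul hxpos (1 + C)
  obtain ⟨p, hpE, hp, hpN⟩ := hshadow x hx N
  have hyE : (L ^ (N : ℤ)) (p - N • x) ∈ centralSubmodule L :=
    zpow_apply_mem_centralSubmodule (sub_mem hpE (nsmul_mem hxE N)) N
  have hpull : ‖p - N • x‖ ≤ C := by
    calc ‖p - N • x‖ = ‖(L ^ (-(N : ℤ))) ((L ^ (N : ℤ)) (p - N • x))‖ := by
          rw [zpow_neg_apply_zpow_apply]
      _ ≤ C * ‖(L ^ (N : ℤ)) (p - N • x)‖ := hC _ hyE _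
      _ ≤ C := mul_le_of_le_one_right hC0 hpN
  have hNx : N • ‖x‖ ≤ 1 + C := by
    calc N • ‖x‖ = ‖p - (p - N • x)‖ := by rw [sub_sub_cancel, RCLike.norm_nsmul ℂ]
      _ ≤ 1 + C := norm_sub_le_of_le hp hpull
  exact hN.not_ge hNx

theorem centralDirection_eq_zero_of_shadowing_general (L : E ≃L[ℂ] E) (hL : ShadowingProperty L)
    (hE : IsComplete (CentralDirection L)) :
    CentralDirection L = {0} ∧ Expansive L := by
  obtain ⟨C, hC⟩ := exists_norm_zpow_apply_le_of_isComplete hE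
  have hexp : Expansive L := hL.expansive_of_norm_zpow_apply_le hC
  exact ⟨hexp.centralDirection_eq_zero, hexp⟩

end NormedSpace

theorem centralDirection_eq_zero_of_shadowing (L : X ≃L[ℂ] X)
    (hL : ShadowingProperty L) (hcl : IsClosed (CentralDirection L)) :
    CentralDirection L = {0} ∧ Expansive L :=
  centralDirection_eq_zero_of_shadowing_general L hL hcl.isComplete
end

section
/- Let X be a complex Banach space and L an invertible bounded linear operator on X. Suppose there is a direct-sum decomposition X = A ⊕ B into closed subspaces such that L(A) ⊆ A, L⁻¹(B) ⊆ B, and Lⁿ|_A → 0 and L⁻ⁿ|_B → 0 strongly (pointwise) as n → ∞. Then ⋃_{n,m≥0} (Lⁿ(B) ∩ L⁻ᵐ(A)) is a subspace of the set H of homoclinic points of L which is invariant (L maps it onto itself) and dense in H. -/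
open Filter Topology

variable {X : Type*} [NormedAddCommGroup X] [NormedSpace ℂ X] [CompleteSpace X]

/-- The set of homoclinic points of `L`: points whose orbit tends to `0`
both forwards and backwards. -/
def Homoclinic (L : X ≃L[ℂ] X) : Set X :=
  {x : X | Tendsto (fun n : ℤ => (L ^ n) x) atTop (𝓝 0) ∧
    Tendsto (fun n : ℤ => (L ^ n) x) atBot (𝓝 0)}

/-! Let `E(f, A)` be the subspace of points whose `f`-orbit is eventually in `A`. Because `A` is
`L`-invariant and `B` is `L⁻¹`-invariant, the union in the theorem is `U = E(L, A) ∩ E(L⁻¹, B)`,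
an `L`-invariant subspace of homoclinic points.

For density, let `P` and `Q` be the projections onto `A` and `B` along each other. If `x` is
homoclinic, then `x - (LⁿPL⁻ⁿx + L⁻ⁿQLⁿx)` lies in `U`: since `x - L⁻ⁿQLⁿx = L⁻ⁿPLⁿx`, both
`LⁿPL⁻ⁿx` and `x - L⁻ⁿQLⁿx` lie in `E(L, A)`, and symmetrically for `E(L⁻¹, B)`. The correction
tends to `0`: the operators `LⁿP` converge strongly, hence are equicontinuous by the
Banach–Steinhaus theorem, and they are applied to `L⁻ⁿx → 0`; likewise for `L⁻ⁿQ`.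
-/

section EventualPreimage

variable {R M : Type*}

section Semiring

variable [Semiring R] [AddCommMonoid M] [Module R M]

/-- The submodule of points whose orbit under `f` eventually stays in `A`. Asking for all large
iterates, rather than for some iterate, makes this a submodule even if `A` is not `f`-invariant. -/
def eventualPreimage (f : M →ₗ[R] M) (A : Submodule R M) : Submodule R M where
  carrier := {x | ∀ᶠ n in atTop, f^[n] x ∈ A}
  add_mem' hx hy := by
    filter_upwards [hx, hy] with n hxn hyn
    simpa only [iterate_map_add] using A.add_mem hxn hyn
  zero_mem' := .of_forall fun n => by simp only [iterate_map_zero, A.zero_mem]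
  smul_mem' c x hx := by
    filter_upwards [hx] with n hxn
    simpa only [← Module.End.pow_apply, map_smul] using A.smul_mem c hxn

variable {f : M →ₗ[R] M} {A : Submodule R M} {x : M}

theorem iterate_mem_eventualPreimage_iff (n : ℕ) :
    f^[n] x ∈ eventualPreimage f A ↔ x ∈ eventualPreimage f A := by
  change (∀ᶠ k in atTop, f^[k] (f^[n] x) ∈ A) ↔ ∀ᶠ k in atTop, f^[k] x ∈ A
  simp only [← Function.iterate_add_apply]
  rw [← eventually_map (m := (· + n)) (P := fun k => f^[k] x ∈ A), map_add_atTop_eq_nat]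

theorem apply_mem_eventualPreimage_iff :
    f x ∈ eventualPreimage f A ↔ x ∈ eventualPreimage f A :=
  iterate_mem_eventualPreimage_iff 1

theorem le_eventualPreimage (hA : Set.MapsTo f A A) : A ≤ eventualPreimage f A :=
  fun _ hx => .of_forall fun n => hA.iterate n hx

theorem mem_eventualPreimage_iff_exists (hA : Set.MapsTo f A A) :
    x ∈ eventualPreimage f A ↔ ∃ n, f^[n] x ∈ A :=
  ⟨Eventually.exists, fun ⟨n, hn⟩ =>
    (iterate_mem_eventualPreimage_iff n).1 (le_eventualPreimage hA hn)⟩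

end Semiring

theorem sub_add_projection_mem_eventualPreimage [Ring R] [AddCommGroup M] [Module R M]
    {L : M ≃ₗ[R] M} {A B : Submodule R M} (hAB : IsCompl A B) (hA : Set.MapsTo L A A)
    (n : ℕ) (x : M) :
    x - (L^[n] (A.projection B hAB (L.symm^[n] x)) +
      L.symm^[n] (B.projection A hAB.symm (L^[n] x))) ∈ eventualPreimage (L : M →ₗ[R] M) A := by
  set P := A.projection B hAB
  set Q := B.projection A hAB.symm
  have symm_iterate (y : M) : L.symm^[n] (L^[n] y) = y :=
    Function.LeftInverse.iterate L.symm_apply_apply n y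
  have iterate_symm (y : M) : L^[n] (L.symm^[n] y) = y :=
    Function.LeftInverse.iterate L.apply_symm_apply n y
  have hP (y : M) : P y ∈ eventualPreimage (L : M →ₗ[R] M) A :=
    le_eventualPreimage hA (Submodule.projection_apply_mem hAB y)
  have forward_mem : L^[n] (P (L.symm^[n] x)) ∈ eventualPreimage (L : M →ₗ[R] M) A :=
    (iterate_mem_eventualPreimage_iff n).2 (hP _)
  have backward_mem : L.symm^[n] (P (L^[n] x)) ∈ eventualPreimage (L : M →ₗ[R] M) A :=
    (iterate_mem_eventualPreimage_iff n).1 <| by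
      simpa only [LinearEquiv.coe_coe, iterate_symm] using hP (L^[n] x)
  have sub_backward : x - L.symm^[n] (Q (L^[n] x)) = L.symm^[n] (P (L^[n] x)) := by
    rw [sub_eq_iff_eq_add, ← iterate_map_add, Submodule.projection_add_projection_eq_self,
      symm_iterate]
  rw [add_comm, ← sub_sub, sub_backward]
  exact Submodule.sub_mem _ backward_mem forward_mem

end EventualPreimage

section Homoclinic

variable {R M : Type*} [Semiring R] [AddCommMonoid M] [Module R M] [TopologicalSpace M]

theorem continuousLinearEquiv_coe_pow (L : M ≃L[R] M) (n : ℕ) : ⇑(L ^ n) = L^[n] :=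
  hom_coe_pow _ rfl (fun _ _ => rfl) L n

theorem image_pow_eq_preimage_iterate_symm (L : M ≃L[R] M) (n : ℕ) (s : Set M) :
    ⇑(L ^ n) '' s = L.symm^[n] ⁻¹' s := by
  rw [continuousLinearEquiv_coe_pow]
  exact congrFun (Set.image_eq_preimage_of_inverse
    (Function.LeftInverse.iterate L.symm_apply_apply n)
    (Function.LeftInverse.iterate L.apply_symm_apply n)) s

/-- The points whose forward orbit under `L` eventually stays in `A` and whose backward orbit
eventually stays in `B`. This is the union in the theorem, encoded as an intersection of two
submodules that `L ↔ L⁻¹`, `A ↔ B` exchanges. -/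
def homoclinicCore (L : M ≃L[R] M) (A B : Submodule R M) : Submodule R M :=
  eventualPreimage (L : M →ₗ[R] M) A ⊓ eventualPreimage (L.symm : M →ₗ[R] M) B

theorem coe_homoclinicCore {L : M ≃L[R] M} {A B : Submodule R M}
    (hLA : Set.MapsTo L A A) (hLB : Set.MapsTo L.symm B B) :
    (homoclinicCore L A B : Set M) =
      ⋃ (n : ℕ) (m : ℕ), (⇑(L ^ n) '' (B : Set M)) ∩ (⇑(L.symm ^ m) '' (A : Set M)) := by
  ext x
  have forward : x ∈ eventualPreimage (L : M →ₗ[R] M) A ↔ ∃ m, L^[m] x ∈ A :=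
    mem_eventualPreimage_iff_exists hLA
  have backward : x ∈ eventualPreimage (L.symm : M →ₗ[R] M) B ↔ ∃ n, L.symm^[n] x ∈ B :=
    mem_eventualPreimage_iff_exists hLB
  simp only [homoclinicCore, SetLike.mem_coe, Submodule.mem_inf, forward, backward,
    image_pow_eq_preimage_iterate_symm, ContinuousLinearEquiv.symm_symm, Set.mem_iUnion,
    Set.mem_inter_iff, Set.mem_preimage, exists_and_right, and_comm]

theorem image_homoclinicCore (L : M ≃L[R] M) (A B : Submodule R M) :
    L '' homoclinicCore L A B = homoclinicCore L A B := by
  have symm_apply_mem (x : M) : L.symm x ∈ homoclinicCore L A B ↔ x ∈ homoclinicCore L A B := by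
    refine and_congr ?_ apply_mem_eventualPreimage_iff
    simpa using (apply_mem_eventualPreimage_iff (f := (L : M →ₗ[R] M)) (x := L.symm x)).symm
  rw [L.image_eq_preimage_symm]
  exact Set.ext symm_apply_mem

variable [ContinuousAdd M] [ContinuousConstSMul R M]

/-- The stable subspace of `f`: the points whose forward orbit tends to `0`. -/
def stableSubmodule (f : M →ₗ[R] M) : Submodule R M where
  carrier := {x | Tendsto (fun n : ℕ => f^[n] x) atTop (𝓝 0)}
  add_mem' hx hy := by simpa only [Set.mem_ofPred_eq, iterate_map_add, add_zero] using hx.add hy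
  zero_mem' := by simp only [Set.mem_ofPred_eq, iterate_map_zero, tendsto_const_nhds]
  smul_mem' c x hx := by
    simpa only [Set.mem_ofPred_eq, ← Module.End.pow_apply, map_smul, smul_zero]
      using hx.const_smul c

theorem mem_stableSubmodule_iff_pow {L : M ≃L[R] M} {x : M} :
    x ∈ stableSubmodule (L : M →ₗ[R] M) ↔ Tendsto (fun n : ℕ => (L ^ n) x) atTop (𝓝 0) := by
  simp only [continuousLinearEquiv_coe_pow]
  rfl

theorem eventualPreimage_le_stableSubmodule {f : M →ₗ[R] M} {A : Submodule R M}
    (hA : A ≤ stableSubmodule f) : eventualPreimage f A ≤ stableSubmodule f := by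
  intro x hx
  obtain ⟨n, hn⟩ := Eventually.exists hx
  have hfn : Tendsto (fun k : ℕ => f^[k] (f^[n] x)) atTop (𝓝 0) := hA hn
  simp only [← Function.iterate_add_apply] at hfn
  exact (tendsto_add_atTop_iff_nat n).1 hfn

/-- The homoclinic points of `L` as a submodule. The backward condition is phrased through the
natural powers of `L⁻¹`, so that it is the forward condition for `L⁻¹`. -/
def homoclinicSubmodule (L : M ≃L[R] M) : Submodule R M :=
  stableSubmodule (L : M →ₗ[R] M) ⊓ stableSubmodule (L.symm : M →ₗ[R] M)

theorem mem_homoclinicSubmodule_iff_zpow {L : M ≃L[R] M} {x : M} :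
    x ∈ homoclinicSubmodule L ↔ Tendsto (fun n : ℤ => (L ^ n) x) atTop (𝓝 0) ∧
      Tendsto (fun n : ℤ => (L ^ n) x) atBot (𝓝 0) := by
  have zpow_neg_natCast (n : ℕ) : L ^ (-n : ℤ) = L.symm ^ n := by
    rw [zpow_neg, zpow_natCast, ← inv_pow]; rfl
  rw [← tendsto_comp_neg_atTop_iff, ← Nat.map_cast_int_atTop, tendsto_map'_iff, tendsto_map'_iff]
  simp only [Function.comp_def, zpow_natCast, zpow_neg_natCast, ← mem_stableSubmodule_iff_pow]
  rfl

theorem homoclinicCore_le_homoclinicSubmodule {L : M ≃L[R] M} {A B : Submodule R M}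
    (hA : A ≤ stableSubmodule (L : M →ₗ[R] M)) (hB : B ≤ stableSubmodule (L.symm : M →ₗ[R] M)) :
    homoclinicCore L A B ≤ homoclinicSubmodule L :=
  inf_le_inf (eventualPreimage_le_stableSubmodule hA) (eventualPreimage_le_stableSubmodule hB)

end Homoclinic

theorem coe_homoclinicSubmodule {E : Type*} [NormedAddCommGroup E] [NormedSpace ℂ E]
    (L : E ≃L[ℂ] E) : (homoclinicSubmodule L : Set E) = Homoclinic L :=
  Set.ext fun _ => mem_homoclinicSubmodule_iff_zpow

section BanachSteinhaus

variable {𝕜 E : Type*} [NontriviallyNormedField 𝕜] [AddCommGroup E] [Module 𝕜 E] [UniformSpace E]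
  [IsUniformAddGroup E] [ContinuousSMul 𝕜 E] [BarrelledSpace 𝕜 E]

theorem tendsto_apply_zero_of_isVonNBounded_range {ι F : Type*} [AddCommGroup F] [Module 𝕜 F]
    [UniformSpace F] [IsUniformAddGroup F] [PolynormableSpace 𝕜 F] {T : ι → E →L[𝕜] F}
    (hT : ∀ x, Bornology.IsVonNBounded 𝕜 (Set.range fun i => T i x)) {l : Filter ι} {u : ι → E}
    (hu : Tendsto u l (𝓝 0)) : Tendsto (fun i => T i (u i)) l (𝓝 0) := by
  have equicontinuousAt_zero : EquicontinuousAt (fun i => ⇑(T i)) 0 :=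
    (PolynormableSpace.banach_steinhaus hT).equicontinuous 0
  rw [Uniform.tendsto_nhds_right, tendsto_def]
  intro V hV
  filter_upwards [hu.eventually (equicontinuousAt_zero V hV)] with i hi
  simpa only [map_zero] using! hi i

variable [PolynormableSpace 𝕜 E] {L : E ≃L[𝕜] E} {A B : Submodule 𝕜 E}

theorem tendsto_iterate_projectionL_iterate_symm (hAB : Submodule.IsTopCompl A B)
    (hA : A ≤ stableSubmodule (L : E →ₗ[𝕜] E)) {x : E}
    (hx : x ∈ stableSubmodule (L.symm : E →ₗ[𝕜] E)) :
    Tendsto (fun n : ℕ => L^[n] (A.projectionL B hAB (L.symm^[n] x))) atTop (𝓝 0) := by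
  let T (n : ℕ) : E →L[𝕜] E := ((L ^ n : E ≃L[𝕜] E) : E →L[𝕜] E) ∘L A.projectionL B hAB
  have hT (y : E) : Tendsto (fun n => T n y) atTop (𝓝 0) :=
    mem_stableSubmodule_iff_pow.1 (hA (Submodule.projectionL_apply_mem hAB y))
  simpa only [T, ContinuousLinearMap.comp_apply, ContinuousLinearEquiv.coe_coe,
    continuousLinearEquiv_coe_pow] using!
    tendsto_apply_zero_of_isVonNBounded_range (fun y => (hT y).isVonNBounded_range 𝕜) hx

theorem homoclinicSubmodule_le_topologicalClosure_homoclinicCore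
    (hAB : Submodule.IsTopCompl A B) (hLA : Set.MapsTo L A A) (hLB : Set.MapsTo L.symm B B)
    (hA : A ≤ stableSubmodule (L : E →ₗ[𝕜] E)) (hB : B ≤ stableSubmodule (L.symm : E →ₗ[𝕜] E)) :
    homoclinicSubmodule L ≤ (homoclinicCore L A B).topologicalClosure := by
  rintro x ⟨hx_forward, hx_backward⟩
  let correction (n : ℕ) : E := L^[n] (A.projectionL B hAB (L.symm^[n] x)) +
    L.symm^[n] (B.projectionL A hAB.symm (L^[n] x))
  have correction_tendsto : Tendsto correction atTop (𝓝 0) := by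
    simpa only [add_zero] using! (tendsto_iterate_projectionL_iterate_symm hAB hA hx_backward).add
      (tendsto_iterate_projectionL_iterate_symm hAB.symm hB hx_forward)
  have sub_correction_mem (n : ℕ) : x - correction n ∈ homoclinicCore L A B := by
    refine ⟨sub_add_projection_mem_eventualPreimage (L := L.toLinearEquiv) hAB.isCompl hLA n x, ?_⟩
    simp only [correction, add_comm (L^[n] _)]
    exact sub_add_projection_mem_eventualPreimage (L := L.symm.toLinearEquiv) hAB.isCompl.symm
      hLB n x
  have sub_correction_tendsto : Tendsto (fun n => x - correction n) atTop (𝓝 x) := by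
    simpa only [sub_zero] using tendsto_const_nhds.sub correction_tendsto
  exact mem_closure_of_tendsto sub_correction_tendsto (.of_forall sub_correction_mem)

theorem homoclinic_dense_subspace_general (hAB : Submodule.IsTopCompl A B)
    (hLA : Set.MapsTo L A A) (hLB : Set.MapsTo L.symm B B)
    (hA : A ≤ stableSubmodule (L : E →ₗ[𝕜] E)) (hB : B ≤ stableSubmodule (L.symm : E →ₗ[𝕜] E)) :
    ∃ U : Submodule 𝕜 E,
      (U : Set E) = ⋃ (n : ℕ) (m : ℕ), (⇑(L ^ n) '' (B : Set E)) ∩ (⇑(L.symm ^ m) '' (A : Set E)) ∧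
      U ≤ homoclinicSubmodule L ∧ L '' U = U ∧ homoclinicSubmodule L ≤ U.topologicalClosure :=
  ⟨homoclinicCore L A B, coe_homoclinicCore hLA hLB, homoclinicCore_le_homoclinicSubmodule hA hB,
    image_homoclinicCore L A B,
    homoclinicSubmodule_le_topologicalClosure_homoclinicCore hAB hLA hLB hA hB⟩

end BanachSteinhaus

theorem homoclinic_dense_subspace (L : X ≃L[ℂ] X) (A B : Submodule ℂ X)
    (hAcl : IsClosed (A : Set X)) (hBcl : IsClosed (B : Set X)) (hcompl : IsCompl A B)
    (hLA : ∀ x ∈ A, L x ∈ A) (hLB : ∀ x ∈ B, L.symm x ∈ B)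
    (hAstrong : ∀ x ∈ A, Tendsto (fun n : ℕ => (L ^ n) x) atTop (𝓝 0))
    (hBstrong : ∀ x ∈ B, Tendsto (fun n : ℕ => (L.symm ^ n) x) atTop (𝓝 0)) :
    (⋃ (n : ℕ) (m : ℕ), (⇑(L ^ n) '' (B : Set X)) ∩ (⇑(L.symm ^ m) '' (A : Set X)))
        ⊆ Homoclinic L ∧
    (0 : X) ∈ (⋃ (n : ℕ) (m : ℕ), (⇑(L ^ n) '' (B : Set X)) ∩ (⇑(L.symm ^ m) '' (A : Set X))) ∧
    (∀ x ∈ (⋃ (n : ℕ) (m : ℕ), (⇑(L ^ n) '' (B : Set X)) ∩ (⇑(L.symm ^ m) '' (A : Set X))),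
      ∀ y ∈ (⋃ (n : ℕ) (m : ℕ), (⇑(L ^ n) '' (B : Set X)) ∩ (⇑(L.symm ^ m) '' (A : Set X))),
        x + y ∈ (⋃ (n : ℕ) (m : ℕ), (⇑(L ^ n) '' (B : Set X)) ∩ (⇑(L.symm ^ m) '' (A : Set X)))) ∧
    (∀ (c : ℂ), ∀ x ∈ (⋃ (n : ℕ) (m : ℕ), (⇑(L ^ n) '' (B : Set X)) ∩ (⇑(L.symm ^ m) '' (A : Set X))),
        c • x ∈ (⋃ (n : ℕ) (m : ℕ), (⇑(L ^ n) '' (B : Set X)) ∩ (⇑(L.symm ^ m) '' (A : Set X)))) ∧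
    (⇑L '' (⋃ (n : ℕ) (m : ℕ), (⇑(L ^ n) '' (B : Set X)) ∩ (⇑(L.symm ^ m) '' (A : Set X)))
      = ⋃ (n : ℕ) (m : ℕ), (⇑(L ^ n) '' (B : Set X)) ∩ (⇑(L.symm ^ m) '' (A : Set X))) ∧
    Homoclinic L ⊆
      closure (⋃ (n : ℕ) (m : ℕ), (⇑(L ^ n) '' (B : Set X)) ∩ (⇑(L.symm ^ m) '' (A : Set X))) := by
  obtain ⟨U, hU, hUH, hLU, hHU⟩ := homoclinic_dense_subspace_general
    (Submodule.IsCompl.isTopCompl_of_isClosed hcompl hAcl hBcl) hLA hLB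
    (fun x hx => mem_stableSubmodule_iff_pow.2 (hAstrong x hx))
    (fun x hx => mem_stableSubmodule_iff_pow.2 (hBstrong x hx))
  rw [← hU, ← coe_homoclinicSubmodule]
  exact ⟨hUH, U.zero_mem, fun _ hx _ hy => U.add_mem hx hy, fun c _ hx => U.smul_mem c hx, hLU, hHU⟩
end
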